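/- arXiv:2507.07565 — 4 statements merged into one kernel-verified Lean document; each statement's English description precedes it below -/
import Mathlib

section
/- Let K ≥ 2 and L ≥ 1 be integers. There exists a real K × L matrix A such that (i) every row of A has at least one nonzero entry, (ii) every column of A sums to zero, and (iii) the rank of A equals K − 1, if and only if L ≥ K − 1. -/
open Finset

/-!
A matrix whose columns sum to zero is determined by the rows other than a fixed row `i₀`, and
deleting row `i₀` does not change its rank. Taking columns `e i - e i₀`, with every `i ≠ i₀`
occurring, makes the remaining rows contain an identity matrix, so the rank is as large as the
zero-sum condition allows; such a choice of columns exists as soon as there are enough of them.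
-/

section DifferenceMatrix

variable {m n R : Type*}

section Ring

variable [DecidableEq m] [Ring R]

variable (R) in
/-- The matrix whose `j`-th column is the difference `e (f j) - e i₀` of standard basis vectors:
the incidence matrix of a directed star centred at `i₀`, with edge `j` running to `f j`. An
index `j` with `f j = i₀` gives a zero column. When `f` is the inclusion of `{i // i ≠ i₀}`, the
columns form a basis of the zero-sum vectors. -/
def differenceMatrix (i₀ : m) (f : n → m) : Matrix m n R :=
  Matrix.of fun i j ↦ (if i = f j then 1 else 0) - if i = i₀ then 1 else 0

theorem differenceMatrix_apply (i₀ : m) (f : n → m) (i : m) (j : n) :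
    differenceMatrix R i₀ f i j = (if i = f j then 1 else 0) - if i = i₀ then 1 else 0 :=
  rfl

theorem sum_differenceMatrix [Fintype m] (i₀ : m) (f : n → m) (j : n) :
    ∑ i, differenceMatrix R i₀ f i j = 0 := by
  simp [differenceMatrix_apply]

theorem exists_differenceMatrix_ne_zero [Nontrivial R] [Nontrivial m] {i₀ : m} {f : n → m}
    (hf : ∀ i ≠ i₀, i ∈ Set.range f) (i : m) : ∃ j, differenceMatrix R i₀ f i j ≠ 0 := by
  rcases eq_or_ne i i₀ with rfl | hi
  · obtain ⟨i', hi'⟩ := exists_ne i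
    obtain ⟨j, rfl⟩ := hf i' hi'
    exact ⟨j, by simp [differenceMatrix_apply, hi'.symm]⟩
  · obtain ⟨j, rfl⟩ := hf i hi
    exact ⟨j, by simp [differenceMatrix_apply, hi]⟩

theorem differenceMatrix_mul_submatrix_of_sum_eq_zero [Fintype m] {A : Matrix m n R}
    (hA : ∀ j, ∑ i, A i j = 0) (i₀ : m) :
    differenceMatrix R i₀ (Subtype.val : {i // i ≠ i₀} → m) *
      A.submatrix (Subtype.val : {i // i ≠ i₀} → m) id = A := by
  ext i j
  have hsum : A i₀ j + ∑ k : {k // k ≠ i₀}, A k j = 0 := by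
    rw [← Fintype.sum_eq_add_sum_subtype_ne (fun k ↦ A k j) i₀, hA]
  rcases eq_or_ne i i₀ with rfl | hi
  · have hne (k : {k // k ≠ i}) : i ≠ k := k.2.symm
    simp [Matrix.mul_apply, differenceMatrix_apply, hne, eq_neg_of_add_eq_zero_left hsum]
  · have heq (k : {k // k ≠ i₀}) : i = k ↔ ⟨i, hi⟩ = k := (Subtype.ext_iff (a1 := ⟨i, hi⟩)).symm
    simp [Matrix.mul_apply, differenceMatrix_apply, hi, heq]

end Ring

variable [CommRing R] [Nontrivial R] [Fintype m] [Fintype n]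

theorem rank_submatrix_ne_of_sum_eq_zero {A : Matrix m n R} (hA : ∀ j, ∑ i, A i j = 0) (i₀ : m) :
    (A.submatrix (Subtype.val : {i // i ≠ i₀} → m) id).rank = A.rank := by
  classical
  apply (A.rank_submatrix_le _ _).antisymm
  conv_lhs => rw [← differenceMatrix_mul_submatrix_of_sum_eq_zero hA i₀]
  exact Matrix.rank_mul_le_right _ _

theorem rank_differenceMatrix [DecidableEq m] {i₀ : m} {f : n → m}
    (hf : ∀ i ≠ i₀, i ∈ Set.range f) :
    (differenceMatrix R i₀ f).rank = Fintype.card m - 1 := by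
  choose g hg using fun i : {i // i ≠ i₀} ↦ hf i i.2
  let B := (differenceMatrix R i₀ f).submatrix (Subtype.val : {i // i ≠ i₀} → m) id
  have hB : B.submatrix id g = 1 := by
    ext i j
    simp [B, differenceMatrix_apply, hg, Matrix.one_apply, Subtype.ext_iff, i.2]
  have hcard : Fintype.card {i // i ≠ i₀} = Fintype.card m - 1 := Set.card_ne_eq i₀
  rw [← rank_submatrix_ne_of_sum_eq_zero (sum_differenceMatrix i₀ f) i₀, ← hcard]
  apply B.rank_le_card_height.antisymm
  calc
    Fintype.card {i // i ≠ i₀} = (B.submatrix id g).rank := by rw [hB, Matrix.rank_one]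
    _ ≤ B.rank := B.rank_submatrix_le _ _

end DifferenceMatrix

theorem exists_forall_ne_mem_range {m n : Type*} [Fintype m] [Fintype n]
    (h : Fintype.card m - 1 ≤ Fintype.card n) (i₀ : m) :
    ∃ f : n → m, ∀ i ≠ i₀, i ∈ Set.range f := by
  classical
  have hcard : Fintype.card {i // i ≠ i₀} = Fintype.card m - 1 := Set.card_ne_eq i₀
  obtain ⟨e⟩ := Function.Embedding.nonempty_of_card_le (hcard.trans_le h)
  exact ⟨Function.extend e Subtype.val fun _ ↦ i₀, fun i hi ↦
    ⟨e ⟨i, hi⟩, e.injective.extend_apply _ _ _⟩⟩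

theorem exists_secure_generator_iff_general {m n : Type*} (R : Type*) [CommRing R] [Nontrivial R]
    [Fintype m] [Nontrivial m] [Fintype n] :
    (∃ A : Matrix m n R,
      (∀ i, ∃ j, A i j ≠ 0) ∧
      (∀ j, ∑ i, A i j = 0) ∧
      A.rank = Fintype.card m - 1) ↔ Fintype.card m - 1 ≤ Fintype.card n := by
  classical
  constructor
  · rintro ⟨A, -, -, hrank⟩
    exact hrank ▸ A.rank_le_card_width
  · intro h
    obtain ⟨i₀⟩ : Nonempty m := inferInstance
    obtain ⟨f, hf⟩ := exists_forall_ne_mem_range h i₀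
    exact ⟨differenceMatrix R i₀ f, exists_differenceMatrix_ne_zero hf,
      sum_differenceMatrix i₀ f, rank_differenceMatrix hf⟩

/-- **Existence condition for secure generator matrices.**
For integers `K ≥ 2` and `L ≥ 1`, there exists a real `K × L` matrix `A` such that
(i) every row has at least one nonzero entry, (ii) every column sums to zero, and
(iii) `rank A = K - 1`, if and only if `L ≥ K - 1`. -/
theorem exists_secure_generator_iff (K L : ℕ) (hK : 2 ≤ K) (hL : 1 ≤ L) :
    (∃ A : Matrix (Fin K) (Fin L) ℝ,
      (∀ k, ∃ l, A k l ≠ 0) ∧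
      (∀ l, ∑ k, A k l = 0) ∧
      A.rank = K - 1) ↔ L ≥ K - 1 := by
  have : Nontrivial (Fin K) := Fin.nontrivial_iff_two_le.mpr hK
  simpa using exists_secure_generator_iff_general (m := Fin K) (n := Fin L) ℝ
end

section
/- Let K ≥ 2 and L ≥ 1 be integers and let λ > 0. There exists a real K × L matrix A such that (i) every row of A has at least one nonzero entry, (ii) every column of A sums to zero, (iii) the rank of A equals K − 1, and (iv) every row of A has squared Euclidean norm exactly λ², if and only if L ≥ K − 1. -/
open Finset

/-!
The rank bound `rank A ≤ L` forces `L ≥ K - 1`. Conversely, the vertices of a regular simplex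
centred at the origin of a `(K - 1)`-dimensional inner product space have equal norms, sum to zero
and span the space; up to scaling they are the projections of an orthonormal basis onto the
orthogonal complement of the sum of that basis. Embedded isometrically in `L`-dimensional space and
rescaled, they are the rows of a suitable `A`.
-/

open Module Submodule

section CenteredProjection

variable {𝕜 E ι : Type*} [RCLike 𝕜] [NormedAddCommGroup E] [InnerProductSpace 𝕜 E] [Fintype ι]

variable (𝕜) in
/-- The orthogonal projection of `v i` onto the orthogonal complement of the sum of the family `v`.
For an orthonormal family `v` these are the vertices of a regular simplex centred at the origin.
The codomain is the complement itself, so that the vertices can be said to span it. -/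
noncomputable def centeredProjection (v : ι → E) (i : ι) : (span 𝕜 {∑ j, v j})ᗮ :=
  (span 𝕜 {∑ j, v j})ᗮ.orthogonalProjectionOnto (v i)

theorem sum_centeredProjection (v : ι → E) : ∑ i, centeredProjection 𝕜 v i = 0 := by
  simp only [centeredProjection, ← map_sum]
  exact orthogonalProjectionOnto_orthogonalComplement_singleton_eq_zero _

theorem span_range_centeredProjection {v : ι → E} (hv : span 𝕜 (Set.range v) = ⊤) :
    span 𝕜 (Set.range (centeredProjection 𝕜 v)) = ⊤ := by
  let P := (span 𝕜 {∑ j, v j})ᗮ.orthogonalProjectionOnto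
  have hP : P.toLinearMap.range = ⊤ := LinearMap.range_eq_top.2 fun w ↦
    ⟨w, orthogonalProjectionOnto_mem_subspace_eq_self w⟩
  calc span 𝕜 (Set.range (centeredProjection 𝕜 v))
      = (span 𝕜 (Set.range v)).map P.toLinearMap := by rw [map_span, ← Set.range_comp]; rfl
    _ = ⊤ := by rw [hv, Submodule.map_top, hP]

theorem inner_sum_eq_one_of_orthonormal {v : ι → E} (hv : Orthonormal 𝕜 v) (i : ι) :
    inner 𝕜 (v i) (∑ j, v j) = 1 := by
  simpa using hv.inner_right_fintype (fun _ ↦ 1) i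

theorem norm_sum_sq_of_orthonormal {v : ι → E} (hv : Orthonormal 𝕜 v) :
    ‖∑ i, v i‖ ^ 2 = Fintype.card ι := by
  rw [norm_sq_eq_re_inner (𝕜 := 𝕜), sum_inner]
  simp [inner_sum_eq_one_of_orthonormal hv]

theorem norm_centeredProjection_sq {v : ι → E} (hv : Orthonormal 𝕜 v) (i : ι) :
    ‖centeredProjection 𝕜 v i‖ ^ 2 = 1 - (Fintype.card ι : ℝ)⁻¹ := by
  have : Nonempty ι := ⟨i⟩
  have inner_eq : inner 𝕜 (∑ j, v j) (v i) = 1 := by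
    rw [← inner_conj_symm, inner_sum_eq_one_of_orthonormal hv, map_one]
  have norm_proj_sq : ‖(span 𝕜 {∑ j, v j}).orthogonalProjectionOnto (v i)‖ ^ 2 =
      (Fintype.card ι : ℝ)⁻¹ := by
    rw [coe_norm, ← starProjection_apply, starProjection_singleton, inner_eq, norm_smul, mul_pow,
      norm_sum_sq_of_orthonormal hv]
    simp only [map_natCast, one_div, norm_inv, RCLike.norm_natCast, inv_pow]
    field_simp
  have pythagoras := norm_sq_eq_add_norm_sq_projection (v i) (span 𝕜 {∑ j, v j})
  rw [hv.norm_eq_one i, norm_proj_sq] at pythagoras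
  rw [centeredProjection]
  linarith

theorem finrank_orthogonal_span_sum [Nonempty ι] (b : OrthonormalBasis ι 𝕜 E) :
    finrank 𝕜 (span 𝕜 {∑ i, b i})ᗮ = Fintype.card ι - 1 := by
  have : FiniteDimensional 𝕜 E := b.toBasis.finiteDimensional_of_finite
  have sum_ne_zero : ∑ i, b i ≠ 0 := by
    rw [← norm_ne_zero_iff, ← sq_eq_zero_iff.ne, norm_sum_sq_of_orthonormal b.orthonormal]
    exact_mod_cast Fintype.card_ne_zero
  have finrank_add := (span 𝕜 {∑ i, b i}).finrank_add_finrank_orthogonal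
  rw [finrank_span_singleton sum_ne_zero, finrank_eq_card_basis b.toBasis] at finrank_add
  lia

end CenteredProjection

theorem finrank_span_range_comp_of_injective {R M N ι : Type*} [Semiring R]
    [AddCommMonoid M] [AddCommMonoid N] [Module R M] [Module R N] {f : M →ₗ[R] N}
    (hf : Function.Injective f) (v : ι → M) :
    finrank R (span R (Set.range (f ∘ v))) = finrank R (span R (Set.range v)) := by
  rw [Set.range_comp, ← map_span]
  exact (equivMapOfInjective f hf _).symm.finrank_eq

section InnerProductSpace

variable {𝕜 E F : Type*} [RCLike 𝕜] [NormedAddCommGroup E] [InnerProductSpace 𝕜 E]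
  [FiniteDimensional 𝕜 E] [NormedAddCommGroup F] [InnerProductSpace 𝕜 F] [FiniteDimensional 𝕜 F]

theorem nonempty_linearIsometry_of_finrank_le (h : finrank 𝕜 E ≤ finrank 𝕜 F) :
    Nonempty (E →ₗᵢ[𝕜] F) := by
  let e := stdOrthonormalBasis 𝕜 E
  let f := stdOrthonormalBasis 𝕜 F
  let T := e.toBasis.constr 𝕜 (f ∘ Fin.castLE h)
  have he : Orthonormal 𝕜 e.toBasis := by simp [e.orthonormal]
  have hT : T ∘ e.toBasis = f ∘ Fin.castLE h := funext fun i ↦ e.toBasis.constr_basis 𝕜 _ i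
  exact ⟨T.isometryOfOrthonormal he (hT ▸ f.orthonormal.comp _ (Fin.castLE_injective h))⟩

theorem exists_sum_eq_zero_and_finrank_span_and_norm_eq {ι : Type*} [Fintype ι] [Nontrivial ι]
    (h : Fintype.card ι - 1 ≤ finrank 𝕜 F) {r : ℝ} (hr : 0 < r) :
    ∃ v : ι → F, ∑ i, v i = 0 ∧ finrank 𝕜 (span 𝕜 (Set.range v)) = Fintype.card ι - 1 ∧
      ∀ i, ‖v i‖ = r := by
  let b := EuclideanSpace.basisFun ι 𝕜
  let u := centeredProjection 𝕜 b
  have finrank_eq := finrank_orthogonal_span_sum b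
  obtain ⟨f⟩ := nonempty_linearIsometry_of_finrank_le (finrank_eq.trans_le h)
  let s := √(1 - (Fintype.card ι : ℝ)⁻¹)
  have hs : 0 < s := Real.sqrt_pos.2 <| sub_pos.2 <| inv_lt_one_of_one_lt₀ <|
    mod_cast Fintype.one_lt_card
  have norm_u (i : ι) : ‖u i‖ = s := by
    rw [← Real.sqrt_sq (norm_nonneg (u i)), norm_centeredProjection_sq b.orthonormal]
  let g := ((r / s : ℝ) : 𝕜) • f.toLinearMap
  have hg : Function.Injective g :=
    (smul_right_injective F (by simpa using ⟨hr.ne', hs.ne'⟩)).comp f.injective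
  refine ⟨g ∘ u, ?_, ?_, fun i ↦ ?_⟩
  · simp only [Function.comp_apply, ← map_sum, u, sum_centeredProjection, map_zero]
  · rw [finrank_span_range_comp_of_injective hg,
      span_range_centeredProjection (by simpa using b.toBasis.span_eq), finrank_top, finrank_eq]
  · calc ‖g (u i)‖ = r / s * ‖u i‖ := by
          simp [g, norm_smul, abs_of_pos hr, abs_of_pos hs]
      _ = r := by rw [norm_u, div_mul_cancel₀ _ hs.ne']

end InnerProductSpace

theorem rank_of_ofLp_eq_finrank_span {𝕜 ι κ : Type*} [RCLike 𝕜] [Finite ι] [Fintype κ]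
    (v : ι → EuclideanSpace 𝕜 κ) :
    (Matrix.of fun i ↦ (v i).ofLp).rank = finrank 𝕜 (span 𝕜 (Set.range v)) := by
  rw [Matrix.rank_eq_finrank_span_row]
  exact finrank_span_range_comp_of_injective (WithLp.linearEquiv 2 𝕜 (κ → 𝕜)).injective v

theorem exists_fair_secure_generator_iff_general {𝕜 ι κ : Type*} [RCLike 𝕜] [Fintype ι]
    [Fintype κ] (hι : 2 ≤ Fintype.card ι) (lam : ℝ) (hlam : 0 < lam) :
    (∃ A : Matrix ι κ 𝕜,
      (∀ k, ∃ l, A k l ≠ 0) ∧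
      (∀ l, ∑ k, A k l = 0) ∧
      A.rank = Fintype.card ι - 1 ∧
      (∀ k, ∑ l, ‖A k l‖ ^ 2 = lam ^ 2)) ↔ Fintype.card κ ≥ Fintype.card ι - 1 := by
  constructor
  · rintro ⟨A, -, -, hrank, -⟩
    exact hrank ▸ A.rank_le_card_width
  · intro h
    have : Nontrivial ι := Fintype.one_lt_card_iff_nontrivial.1 hι
    obtain ⟨v, sum_eq, finrank_eq, norm_eq⟩ :=
      exists_sum_eq_zero_and_finrank_span_and_norm_eq (𝕜 := 𝕜) (F := EuclideanSpace 𝕜 κ) (ι := ι)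
        (by rwa [finrank_euclideanSpace]) hlam
    refine ⟨Matrix.of fun k ↦ (v k).ofLp, fun k ↦ ?_, fun l ↦ ?_,
      (rank_of_ofLp_eq_finrank_span v).trans finrank_eq, fun k ↦ ?_⟩
    · have hv : (v k).ofLp ≠ 0 := by
        simpa [← norm_ne_zero_iff (a := v k), norm_eq] using hlam.ne'
      exact Function.ne_iff.1 hv
    · simpa using congrFun (congrArg WithLp.ofLp sum_eq) l
    · simp [← EuclideanSpace.norm_sq_eq, norm_eq]

/-- **Existence condition for fair secure generator matrices.**
For integers `K ≥ 2`, `L ≥ 1` and a real `λ > 0`, there exists a real `K × L` matrix `A`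
such that (i) every row has at least one nonzero entry, (ii) every column sums to zero,
(iii) `rank A = K - 1`, and (iv) every row has squared Euclidean norm exactly `λ²`,
if and only if `L ≥ K - 1`. -/
theorem exists_fair_secure_generator_iff (K L : ℕ) (hK : 2 ≤ K) (hL : 1 ≤ L)
    (lam : ℝ) (hlam : 0 < lam) :
    (∃ A : Matrix (Fin K) (Fin L) ℝ,
      (∀ k, ∃ l, A k l ≠ 0) ∧
      (∀ l, ∑ k, A k l = 0) ∧
      A.rank = K - 1 ∧
      (∀ k, ∑ l, (A k l) ^ 2 = lam ^ 2)) ↔ L ≥ K - 1 := by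
  simpa using exists_fair_secure_generator_iff_general (𝕜 := ℝ) (ι := Fin K) (κ := Fin L)
    (by simpa using hK) lam hlam
end

section
/- Let K ≥ 2, let γ be an integer with 1 ≤ γ ≤ K − 1, and let λ > 0. Define A ∈ ℝ^{K×K} by A_{k,k} = −γλ/√(γ² + γ) for every k, A_{k,(k+l) mod K} = λ/√(γ² + γ) for every k and every l ∈ {1,…,γ}, and A_{k,l} = 0 otherwise (row and column indices taken modulo K). Then the rank of A equals K − 1. -/
open Finset

/-!
Up to a nonzero scalar, `A` is the generator of a random walk on the directed cycle: its rows sum to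
zero and its off-diagonal entries are nonnegative. A vector `v` in the kernel of such a matrix
satisfies `∑ j, A i j * (v j - v i) = 0` for each `i`, so that a maximum of `v` spreads along the
positive entries of `A` (maximum principle). As `k + 1` is reached from `k` in one jump, `v` is
constant, and the kernel is the line of constant vectors.
-/

open scoped Matrix

section MaximumPrinciple

variable {n R : Type*} [Fintype n] {A : Matrix n n R} {v : n → R}

theorem mulVec_apply_eq_sum_mul_sub [Ring R] (hA : A *ᵥ 1 = 0) (v : n → R) (i : n) :
    (A *ᵥ v) i = ∑ j, A i j * (v j - v i) := by
  have hrow : ∑ j, A i j = 0 := by simpa [Matrix.mulVec, dotProduct] using congrFun hA i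
  simp only [mul_sub, sum_sub_distrib, ← sum_mul, hrow, zero_mul, sub_zero, Matrix.mulVec,
    dotProduct]

theorem apply_eq_of_mulVec_apply_eq_zero_of_forall_le [Ring R] [LinearOrder R]
    [IsStrictOrderedRing R] (hA : A *ᵥ 1 = 0) {i j : n} (hnonneg : ∀ l, l ≠ i → 0 ≤ A i l)
    (hv : (A *ᵥ v) i = 0) (hmax : ∀ l, v l ≤ v i) (hij : 0 < A i j) : v j = v i := by
  have hterm : ∀ l ∈ univ, A i l * (v l - v i) ≤ 0 := by
    intro l _
    obtain rfl | hl := eq_or_ne l i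
    · simp
    · exact mul_nonpos_of_nonneg_of_nonpos (hnonneg l hl) (sub_nonpos.2 (hmax l))
  rw [mulVec_apply_eq_sum_mul_sub hA, sum_eq_zero_iff_of_nonpos hterm] at hv
  exact sub_eq_zero.1 ((mul_eq_zero.1 (hv j (mem_univ j))).resolve_left hij.ne')

theorem exists_forall_apply_eq_of_mulVec_eq_zero [Nonempty n] [Ring R] [LinearOrder R]
    [IsStrictOrderedRing R] (hA : A *ᵥ 1 = 0) (hnonneg : ∀ i j, j ≠ i → 0 ≤ A i j)
    (hconn : ∀ i j, Relation.ReflTransGen (fun k l => 0 < A k l) i j) (hv : A *ᵥ v = 0) :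
    ∃ a, ∀ i, v i = a := by
  obtain ⟨m, hm⟩ := Finite.exists_max v
  refine ⟨v m, fun i => ?_⟩
  induction hconn m i with
  | refl => rfl
  | @tail k l _ hkl hk =>
    have hmax : ∀ j, v j ≤ v k := fun j => hk ▸ hm j
    exact (apply_eq_of_mulVec_apply_eq_zero_of_forall_le hA (hnonneg k) (congrFun hv k) hmax
      hkl).trans hk

variable [Nonempty n] [CommRing R] [LinearOrder R] [IsStrictOrderedRing R]

theorem ker_mulVecLin_eq_span_one (hA : A *ᵥ 1 = 0) (hnonneg : ∀ i j, j ≠ i → 0 ≤ A i j)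
    (hconn : ∀ i j, Relation.ReflTransGen (fun k l => 0 < A k l) i j) :
    LinearMap.ker A.mulVecLin = Submodule.span R {1} := by
  refine le_antisymm (fun v hv => ?_) ?_
  · obtain ⟨a, ha⟩ := exists_forall_apply_eq_of_mulVec_eq_zero hA hnonneg hconn hv
    exact Submodule.mem_span_singleton.2 ⟨a, funext fun i => by simp [ha i]⟩
  · simpa [Submodule.span_singleton_le_iff_mem] using hA

theorem rank_eq_card_sub_one (hA : A *ᵥ 1 = 0) (hnonneg : ∀ i j, j ≠ i → 0 ≤ A i j)
    (hconn : ∀ i j, Relation.ReflTransGen (fun k l => 0 < A k l) i j) :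
    A.rank = Fintype.card n - 1 := by
  have hnullity : Module.finrank R (LinearMap.ker A.mulVecLin) = 1 := by
    rw [ker_mulVecLin_eq_span_one hA hnonneg hconn]
    exact (LinearEquiv.toSpanNonzeroSingleton R (n → R) 1 one_ne_zero).finrank_eq.symm.trans
      (Module.finrank_self R)
  have hrank := (LinearMap.ker A.mulVecLin).finrank_quotient_add_finrank
  rw [hnullity, A.mulVecLin.quotKerEquivRange.finrank_eq, Module.finrank_fintype_fun_eq_card]
    at hrank
  exact Nat.eq_sub_of_add_eq hrank

end MaximumPrinciple

section Cyclic

variable (K γ : ℕ) (R : Type*)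

/-- The generator of the random walk on `ZMod K` that jumps from `k` to each of
`k + 1, …, k + γ` at rate `1`. The matrix of the cyclic construction is a multiple of it. The
representative `(l - k).val ∈ {0, …, K - 1}` is the number of steps from `k` forward to `l`. -/
def cyclicGenerator [Ring R] : Matrix (ZMod K) (ZMod K) R :=
  Matrix.of fun k l => if l = k then -(γ : R) else if (l - k).val ≤ γ then 1 else 0

variable {K γ R}

theorem cyclicGenerator_nonneg [Ring R] [LinearOrder R] [IsStrictOrderedRing R] {k l : ZMod K}
    (hl : l ≠ k) : 0 ≤ cyclicGenerator K γ R k l := by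
  simp only [cyclicGenerator, Matrix.of_apply, if_neg hl]
  split_ifs <;> simp

theorem cyclicGenerator_apply_add_one [Ring R] (hγ1 : 1 ≤ γ) (hγ2 : γ < K) (k : ZMod K) :
    cyclicGenerator K γ R k (k + 1) = 1 := by
  have : Fact (1 < K) := ⟨hγ1.trans_lt hγ2⟩
  simp [cyclicGenerator, ZMod.val_one, hγ1]

variable [NeZero K]

theorem zmod_reflTransGen_of_forall_add_one {r : ZMod K → ZMod K → Prop} (h : ∀ k, r k (k + 1))
    (k l : ZMod K) : Relation.ReflTransGen r k l := by
  have hadd (i : ℕ) : Relation.ReflTransGen r k (k + i) := by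
    induction i with
    | zero => simp [Relation.ReflTransGen.refl]
    | succ i ih => simpa [add_assoc] using ih.tail (h (k + i))
  simpa using hadd (l - k).val

theorem card_filter_zmod_val_sub_le (hγ : γ < K) (k : ZMod K) :
    #{l : ZMod K | (l - k).val ≤ γ} = γ + 1 := by
  rw [← card_range (γ + 1)]
  refine card_nbij' (fun l => (l - k).val) (fun i => k + i) ?_ ?_ ?_ ?_
  · intro l hl
    simpa [Nat.lt_succ_iff] using hl
  · intro i hi
    have hi : i ≤ γ := by simpa [Nat.lt_succ_iff] using hi
    simpa [ZMod.val_natCast_of_lt (hi.trans_lt hγ)] using hi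
  · intro l _
    simp
  · intro i hi
    have hi : i ≤ γ := by simpa [Nat.lt_succ_iff] using hi
    simp [ZMod.val_natCast_of_lt (hi.trans_lt hγ)]

theorem cyclicGenerator_mulVec_one [Ring R] (hγ : γ < K) : cyclicGenerator K γ R *ᵥ 1 = 0 := by
  ext k
  have hentry (l : ZMod K) : cyclicGenerator K γ R k l =
      (if (l - k).val ≤ γ then 1 else 0) - if l = k then (γ : R) + 1 else 0 := by
    obtain rfl | hl := eq_or_ne l k
    · simp [cyclicGenerator]
    · simp [cyclicGenerator, hl]
  simp [Matrix.mulVec, dotProduct, hentry, sum_sub_distrib, card_filter_zmod_val_sub_le hγ]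

theorem rank_cyclicGenerator [CommRing R] [LinearOrder R] [IsStrictOrderedRing R]
    (hγ1 : 1 ≤ γ) (hγ2 : γ < K) : (cyclicGenerator K γ R).rank = K - 1 := by
  have hstep (k : ZMod K) : 0 < cyclicGenerator K γ R k (k + 1) := by
    rw [cyclicGenerator_apply_add_one hγ1 hγ2]
    exact one_pos
  simpa [ZMod.card] using rank_eq_card_sub_one (cyclicGenerator_mulVec_one hγ2)
    (fun _ _ => cyclicGenerator_nonneg) (zmod_reflTransGen_of_forall_add_one hstep)

theorem eq_smul_cyclicGenerator [Ring R] {c : R} {A : Matrix (ZMod K) (ZMod K) R}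
    (hdiag : ∀ k, A k k = -(γ * c)) (hoff : ∀ (k : ZMod K) (i : ℕ), 1 ≤ i → i ≤ γ → A k (k + i) = c)
    (hzero : ∀ k l : ZMod K, l ≠ k → (∀ i : ℕ, 1 ≤ i → i ≤ γ → l ≠ k + i) → A k l = 0) :
    A = c • cyclicGenerator K γ R := by
  ext k l
  obtain rfl | hlk := eq_or_ne l k
  · simp [cyclicGenerator, hdiag, (Nat.cast_commute γ c).eq]
  by_cases hle : (l - k).val ≤ γ
  · have hpos : 1 ≤ (l - k).val := ZMod.val_pos.2 (sub_ne_zero.2 hlk)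
    simpa [cyclicGenerator, hlk, hle] using hoff k (l - k).val hpos hle
  · have hfar (i : ℕ) (_ : 1 ≤ i) (hi : i ≤ γ) : l ≠ k + i := by
      rintro rfl
      refine hle ?_
      rw [add_sub_cancel_left, ZMod.val_natCast]
      exact (Nat.mod_le i K).trans hi
    simp [cyclicGenerator, hlk, hle, hzero k l hlk hfar]

end Cyclic

theorem simplified_construction_rank_general {R : Type*} [CommRing R] [LinearOrder R]
    [IsStrictOrderedRing R] {K γ : ℕ} [NeZero K] (hγ1 : 1 ≤ γ) (hγ2 : γ < K) {c : R} (hc : c ≠ 0)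
    {A : Matrix (ZMod K) (ZMod K) R} (hdiag : ∀ k, A k k = -(γ * c))
    (hoff : ∀ (k : ZMod K) (i : ℕ), 1 ≤ i → i ≤ γ → A k (k + i) = c)
    (hzero : ∀ k l : ZMod K, l ≠ k → (∀ i : ℕ, 1 ≤ i → i ≤ γ → l ≠ k + i) → A k l = 0) :
    A.rank = K - 1 := by
  rw [eq_smul_cyclicGenerator hdiag hoff hzero,
    Matrix.rank_smul_of_mem_nonZeroDivisors _ (mem_nonZeroDivisors_of_ne_zero hc),
    rank_cyclicGenerator hγ1 hγ2]

/-- **Security (rank) of the simplified cyclic construction.**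
Let `K ≥ 2`, `1 ≤ γ ≤ K - 1` and `λ > 0`.  Define the `K × K` real matrix `A`
(indices in `ZMod K`) by `A k k = -γλ/√(γ² + γ)`, `A k (k + i) = λ/√(γ² + γ)` for
`i ∈ {1,…,γ}`, and `A k l = 0` otherwise.  Then `rank A = K - 1`. -/
theorem simplified_construction_rank (K : ℕ) [NeZero K] (hK : 2 ≤ K)
    (γ : ℕ) (hγ1 : 1 ≤ γ) (hγ2 : γ ≤ K - 1) (lam : ℝ) (hlam : 0 < lam)
    (A : Matrix (ZMod K) (ZMod K) ℝ)
    (hdiag : ∀ k : ZMod K, A k k = -((γ : ℝ) * lam) / Real.sqrt ((γ : ℝ) ^ 2 + (γ : ℝ)))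
    (hoff : ∀ (k : ZMod K) (i : ℕ), 1 ≤ i → i ≤ γ →
      A k (k + (i : ZMod K)) = lam / Real.sqrt ((γ : ℝ) ^ 2 + (γ : ℝ)))
    (hzero : ∀ k l : ZMod K, l ≠ k → (∀ i : ℕ, 1 ≤ i → i ≤ γ → l ≠ k + (i : ZMod K)) →
      A k l = 0) :
    A.rank = K - 1 := by
  have hc : lam / Real.sqrt ((γ : ℝ) ^ 2 + (γ : ℝ)) ≠ 0 := by positivity
  exact simplified_construction_rank_general hγ1 (by omega) hc
    (fun k => by rw [hdiag, neg_div, mul_div_assoc]) hoff hzero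
end

section
/- Let v ≥ 0 be a natural number and define functions f_n on the open interval (−1, 1) recursively by f_0(z) = z/(1 − z) and f_{n+1}(z) = z · f_n'(z). Then for every z with |z| < 1, the series ∑_{k=1}^∞ k^v z^k converges absolutely and ∑_{k=1}^∞ k^v z^k = f_v(z); that is, the polylogarithm Li_{−v}(z) of negative integer order equals the v-fold application of the operator z·d/dz to z/(1 − z). -/
/-- The `v`-fold application of the operator `z·d/dz` to the function `z ↦ z/(1 - z)`:
`fIter 0 z = z/(1 - z)` and `fIter (n+1) z = z * (fIter n)'(z)`. -/
noncomputable def fIter : ℕ → ℝ → ℝ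
  | 0 => fun z => z / (1 - z)
  | n + 1 => fun z => z * deriv (fIter n) z

/-! The operator `z·d/dz` multiplies the homogeneous part of degree `n` of a power series by `n`
and does not shrink the disc of convergence. Applied `v` times to the geometric series
`z/(1 - z) = ∑ z ^ n`, `n ≥ 1`, it therefore gives `∑ n ^ v * z ^ n` on the same disc. -/

open scoped ENNReal

section EulerOperator

variable {𝕜 E F : Type*} [NontriviallyNormedField 𝕜]
  [NormedAddCommGroup E] [NormedSpace 𝕜 E] [NormedAddCommGroup F] [NormedSpace 𝕜 F]
  {f : E → F} {p : FormalMultilinearSeries 𝕜 E F} {r : ℝ≥0∞}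

variable (𝕜) in
/-- The Euler operator, sending `f` to its derivative at each point `z` in the radial direction `z`;
in one variable this is `z·d/dz`. -/
noncomputable def eulerOperator (f : E → F) (z : E) : F :=
  fderiv 𝕜 f z z

theorem eulerOperator_eq_mul_deriv (f : 𝕜 → 𝕜) (z : 𝕜) : eulerOperator 𝕜 f z = z * deriv f z :=
  fderiv_eq_smul_deriv z

theorem radius_le_radius_nsmul (p : FormalMultilinearSeries 𝕜 E F) :
    p.radius ≤ FormalMultilinearSeries.radius fun n ↦ n • p n := by
  refine ENNReal.le_of_forall_nnreal_lt fun ρ hρ ↦ ?_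
  obtain ⟨a, ha, C, -, hC⟩ := p.norm_mul_pow_le_mul_pow_of_lt_radius hρ
  have ha_norm : ‖a‖ < 1 := by
    rw [Real.norm_of_nonneg ha.1.le]
    exact ha.2
  have h_majorant : Summable fun n : ℕ ↦ C * (n * a ^ n) := by
    simpa only [pow_one] using (summable_pow_mul_geometric_of_norm_lt_one 1 ha_norm).mul_left C
  refine FormalMultilinearSeries.le_radius_of_summable _ <|
    h_majorant.of_nonneg_of_le (fun n ↦ by positivity) fun n ↦ ?_
  calc ‖n • p n‖ * (ρ : ℝ) ^ n
      ≤ n * ‖p n‖ * (ρ : ℝ) ^ n := by gcongr; exact norm_nsmul_le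
    _ = n * (‖p n‖ * (ρ : ℝ) ^ n) := mul_assoc _ _ _
    _ ≤ n * (C * a ^ n) := mul_le_mul_of_nonneg_left (hC n) n.cast_nonneg
    _ = C * (n * a ^ n) := mul_left_comm _ _ _

theorem hasFPowerSeriesOnBall_eulerOperator [CompleteSpace F]
    (hf : HasFPowerSeriesOnBall f p 0 r) :
    HasFPowerSeriesOnBall (eulerOperator 𝕜 f) (fun n ↦ n • p n) 0 r where
  r_le := hf.r_le.trans (radius_le_radius_nsmul p)
  r_pos := hf.r_pos
  hasSum {y} hy := by
    have h_fderiv : HasSum (fun n ↦ p.derivSeries n (fun _ ↦ y) y) (fderiv 𝕜 f (0 + y) y) :=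
      (hf.fderiv.hasSum hy).mapL (ContinuousLinearMap.apply 𝕜 F y)
    simp only [FormalMultilinearSeries.derivSeries_apply_diag] at h_fderiv
    simpa [eulerOperator] using
      (hasSum_nat_add_iff (f := fun n ↦ n • p n fun _ ↦ y) 1).1 h_fderiv

theorem hasFPowerSeriesOnBall_iterate_eulerOperator [CompleteSpace F]
    (hf : HasFPowerSeriesOnBall f p 0 r) (v : ℕ) :
    HasFPowerSeriesOnBall ((eulerOperator 𝕜)^[v] f) (fun n ↦ n ^ v • p n) 0 r := by
  induction v with
  | zero => simpa only [pow_zero, one_smul] using! hf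
  | succ v ih =>
    simpa only [Function.iterate_succ_apply', pow_succ', mul_smul] using!
      hasFPowerSeriesOnBall_eulerOperator ih

end EulerOperator

section Polylogarithm

variable {𝕜 : Type*} [NontriviallyNormedField 𝕜]

theorem hasFPowerSeriesOnBall_div_one_sub :
    HasFPowerSeriesOnBall (fun z : 𝕜 ↦ z / (1 - z))
      (formalMultilinearSeries_geometric 𝕜 𝕜 - constFormalMultilinearSeries 𝕜 𝕜 1) 0 1 := by
  have h_sub := (hasFPowerSeriesOnBall_inv_one_sub 𝕜 𝕜).sub
    ((hasFPowerSeriesOnBall_const (c := (1 : 𝕜))).mono one_pos le_top)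
  refine h_sub.congr fun z hz ↦ ?_
  have hz_ne : 1 - z ≠ 0 := by
    intro h
    simp [← sub_eq_zero.1 h] at hz
  simp only [Pi.sub_apply]
  field_simp
  ring

theorem summable_norm_polylog_neg_int_order (v : ℕ) {z : 𝕜} (hz : ‖z‖ < 1) :
    Summable fun k : ℕ ↦ ‖((k : 𝕜) + 1) ^ v * z ^ (k + 1)‖ := by
  simpa only [Nat.cast_add_one] using
    (summable_nat_add_iff 1).2 (summable_norm_pow_mul_geometric_of_norm_lt_one v hz)

theorem hasSum_polylog_neg_int_order [CompleteSpace 𝕜] (v : ℕ) {z : 𝕜} (hz : ‖z‖ < 1) :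
    HasSum (fun k : ℕ ↦ ((k : 𝕜) + 1) ^ v * z ^ (k + 1))
      ((eulerOperator 𝕜)^[v] (fun w ↦ w / (1 - w)) z) := by
  have h_series := (hasFPowerSeriesOnBall_iterate_eulerOperator
    hasFPowerSeriesOnBall_div_one_sub v).hasSum (y := z)
      (by simpa [← ofReal_norm] using hz)
  -- The dropped term `n = 0` vanishes also when `v = 0`, as `z / (1 - z)` has no constant term.
  rw [← hasSum_nat_add_iff' 1] at h_series
  simpa [formalMultilinearSeries_geometric, constFormalMultilinearSeries, pow_succ'] using h_series

theorem polylog_neg_int_order_general [CompleteSpace 𝕜] (v : ℕ) (z : 𝕜) (hz : ‖z‖ < 1) :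
    Summable (fun k : ℕ ↦ ‖((k : 𝕜) + 1) ^ v * z ^ (k + 1)‖) ∧
    ∑' k : ℕ, ((k : 𝕜) + 1) ^ v * z ^ (k + 1) =
      (eulerOperator 𝕜)^[v] (fun w ↦ w / (1 - w)) z :=
  ⟨summable_norm_polylog_neg_int_order v hz, (hasSum_polylog_neg_int_order v hz).tsum_eq⟩

theorem fIter_eq_iterate_eulerOperator (v : ℕ) :
    fIter v = (eulerOperator ℝ)^[v] fun z ↦ z / (1 - z) := by
  induction v with
  | zero => rfl
  | succ v ih =>
    ext z
    rw [Function.iterate_succ_apply', ← ih, eulerOperator_eq_mul_deriv, fIter]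

end Polylogarithm

/-- **Polylogarithm of negative integer order.**
For every natural number `v` and every real `z` with `|z| < 1`, the series
`∑_{k=1}^∞ k^v z^k` converges absolutely and
`Li_{-v}(z) = ∑_{k=1}^∞ k^v z^k = (z·d/dz)^v (z/(1 - z))`. -/
theorem polylog_neg_int_order (v : ℕ) (z : ℝ) (hz : |z| < 1) :
    Summable (fun k : ℕ => |((k : ℝ) + 1) ^ v * z ^ (k + 1)|) ∧
    ∑' k : ℕ, ((k : ℝ) + 1) ^ v * z ^ (k + 1) = fIter v z := by
  rw [fIter_eq_iterate_eulerOperator]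
  exact polylog_neg_int_order_general v z hz
end
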